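/- (Proposition 2, lower bound) Let L be a symmetric positive semidefinite real n×n matrix such that I − L is also positive semidefinite, let P = I − L, and let E(H) = trace(Hᵀ L H). Then for every real n×d matrix X, every natural number l, and every real α with 0 ≤ α ≤ 1, E(αX + (1−α)P^l X) ≥ α² · E(X). -/

import Mathlib

open Matrix BigOperators

/-!
Let `q` be nonnegative and commute with `L`, and put `c = α + q`. Then
`c L c = α² L + (2α L q + q L q)`, and the bracket is nonnegative because a product of commuting
nonnegative elements is nonnegative. Hence `α² L ≤ c L c` in the Loewner order. Since `E` is
monotone in `L`, and replacing `X` by `c X` amounts to replacing `L` by `c L c`, the bound follows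
with `q = (1 - α) P ^ l`.
-/

section OrderedAlgebra

variable {A : Type*} [Ring A] [PartialOrder A] [StarRing A] [StarOrderedRing A]
  [TopologicalSpace A] [Algebra ℝ A] [PosSMulMono ℝ A]
  [NonUnitalContinuousFunctionalCalculus ℝ A IsSelfAdjoint] [NonnegSpectrumClass ℝ A]

theorem sq_smul_le_conjugate_smul_one_add {a q : A} (ha : 0 ≤ a) (hq : 0 ≤ q) (haq : Commute a q)
    {α : ℝ} (hα : 0 ≤ α) : α ^ 2 • a ≤ (α • 1 + q) * a * (α • 1 + q) := by
  have expand : (α • 1 + q) * a * (α • 1 + q) = α ^ 2 • a + ((2 * α) • (a * q) + q * a * q) := by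
    simp only [add_mul, mul_add, smul_mul_assoc, mul_smul_comm, one_mul, mul_one, ← haq.eq]
    module
  rw [expand]
  have cross_nonneg : 0 ≤ (2 * α) • (a * q) := smul_nonneg (by positivity) (haq.mul_nonneg ha hq)
  exact le_add_of_nonneg_right (add_nonneg cross_nonneg (conjugate_nonneg_of_nonneg ha hq))

end OrderedAlgebra

section DirichletEnergy

variable {m n R : Type*} [Fintype m] [Fintype n]

/-- The Dirichlet energy `E(H) = trace (Hᴴ L H)` of a feature matrix `H` with respect to a graph
Laplacian `L`. The conjugate transpose allows complex entries; over `ℝ` it is the transpose. -/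
def dirichletEnergy [NonUnitalNonAssocSemiring R] [Star R] (L : Matrix n n R)
    (H : Matrix n m R) : R :=
  (Hᴴ * L * H).trace

theorem dirichletEnergy_mul [NonUnitalSemiring R] [StarRing R] (L M : Matrix n n R)
    (H : Matrix n m R) : dirichletEnergy L (M * H) = dirichletEnergy (Mᴴ * L * M) H := by
  simp only [dirichletEnergy, conjTranspose_mul, Matrix.mul_assoc]

theorem dirichletEnergy_smul_left {S : Type*} [NonUnitalNonAssocSemiring R] [Star R] [Monoid S]
    [DistribMulAction S R] [IsScalarTower S R R] [SMulCommClass S R R] (c : S)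
    (L : Matrix n n R) (H : Matrix n m R) :
    dirichletEnergy (c • L) H = c • dirichletEnergy L H := by
  simp only [dirichletEnergy, Matrix.mul_smul, Matrix.smul_mul, trace_smul]

open scoped ComplexOrder MatrixOrder

variable {𝕜 : Type*} [RCLike 𝕜]

theorem dirichletEnergy_mono_left {L L' : Matrix n n 𝕜} (h : L ≤ L') (H : Matrix n m 𝕜) :
    dirichletEnergy L H ≤ dirichletEnergy L' H := by
  have := ((le_iff.mp h).conjTranspose_mul_mul_same H).trace_nonneg
  rwa [Matrix.mul_sub, Matrix.sub_mul, trace_sub, sub_nonneg] at this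

theorem gpnn_energy_lower_bound_general {L Q : Matrix n n 𝕜} (hL : L.PosSemidef)
    (hQ : Q.PosSemidef) (hLQ : Commute L Q) {α : ℝ} (hα : 0 ≤ α) (X : Matrix n m 𝕜) :
    α ^ 2 • dirichletEnergy L X ≤ dirichletEnergy L (α • X + Q * X) := by
  classical
  have hermitian : (α • 1 + Q)ᴴ = α • 1 + Q := by simp [hQ.isHermitian.eq]
  calc
    α ^ 2 • dirichletEnergy L X = dirichletEnergy (α ^ 2 • L) X :=
      (dirichletEnergy_smul_left _ L X).symm
    _ ≤ dirichletEnergy ((α • 1 + Q) * L * (α • 1 + Q)) X :=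
      dirichletEnergy_mono_left (sq_smul_le_conjugate_smul_one_add hL.nonneg hQ.nonneg hLQ hα) X
    _ = dirichletEnergy L ((α • 1 + Q) * X) := by rw [dirichletEnergy_mul, hermitian]
    _ = dirichletEnergy L (α • X + Q * X) := by
      rw [Matrix.add_mul, Matrix.smul_mul, Matrix.one_mul]

end DirichletEnergy

/-- Proposition 2 (lower bound): `E(αX + (1−α)P^l X) ≥ α² E(X)`. -/
theorem gpnn_energy_lower_bound (n d : ℕ) (L : Matrix (Fin n) (Fin n) ℝ)
    (hL : L.PosSemidef) (hIL : ((1 : Matrix (Fin n) (Fin n) ℝ) - L).PosSemidef)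
    (P : Matrix (Fin n) (Fin n) ℝ) (hP : P = 1 - L)
    (X : Matrix (Fin n) (Fin d) ℝ) (l : ℕ) (α : ℝ) (hα0 : 0 ≤ α) (hα1 : α ≤ 1) :
    α ^ 2 * (Xᵀ * L * X).trace ≤
      ((α • X + (1 - α) • (P ^ l * X))ᵀ * L *
        (α • X + (1 - α) • (P ^ l * X))).trace := by
  subst hP
  have hQ : ((1 - α) • (1 - L) ^ l).PosSemidef := (hIL.pow l).smul (sub_nonneg.mpr hα1)
  have hLQ : Commute L ((1 - α) • (1 - L) ^ l) :=
    (((Commute.one_right L).sub_right (.refl L)).pow_right l).smul_right _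
  simpa only [dirichletEnergy, conjTranspose_eq_transpose_of_trivial, smul_eq_mul,
    Matrix.smul_mul] using gpnn_energy_lower_bound_general hL hQ hLQ hα0 X
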